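/- Every 5-regular graph (finite, undirected, loopless, possibly with parallel edges) admits a zero-sum 6-flow, i.e., an assignment of values from {±1, ±2, ±3, ±4, ±5} to its edges such that for every vertex the sum of the values on the edges incident with that vertex is zero. -/

import Mathlib

/-- A finite undirected multigraph without loops: `E` indexes the edges, and each
edge has an unordered pair of distinct endpoints (parallel edges are allowed). -/
structure Multigraph (V : Type*) (E : Type*) where
  ends : E → Sym2 V
  loopless : ∀ e, ¬ (ends e).IsDiag

namespace Multigraph

variable {V E : Type*}

/-- The edges incident with a vertex `v`. -/
def incidence (G : Multigraph V E) [Fintype E] [DecidableEq V] (v : V) : Finset E :=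
  Finset.univ.filter fun e => v ∈ G.ends e

/-- The degree of a vertex `v`. -/
def degree (G : Multigraph V E) [Fintype E] [DecidableEq V] (v : V) : ℕ :=
  (G.incidence v).card

/-- A zero-sum flow: nonzero integer values on the edges summing to zero at
every vertex. -/
def IsZeroSumFlow (G : Multigraph V E) [Fintype E] [DecidableEq V] (f : E → ℤ) : Prop :=
  (∀ e, f e ≠ 0) ∧ ∀ v, ∑ e ∈ G.incidence v, f e = 0

/-- A zero-sum `k`-flow: a zero-sum flow with values in `{±1, …, ±(k-1)}`. -/
def IsZeroSumKFlow (G : Multigraph V E) [Fintype E] [DecidableEq V] (k : ℕ) (f : E → ℤ) : Prop :=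
  G.IsZeroSumFlow f ∧ ∀ e, |f e| ≤ (k : ℤ) - 1

end Multigraph

lemma EO_aux {E V : Type*} [DecidableEq E] [DecidableEq V] : ∀ (n : ℕ) (Q : Finset E) (s t : E → V),
    Q.card = n →
    (∀ v, Even (∑ e ∈ Q, ((if s e = v then 1 else 0) + (if t e = v then 1 else 0) : ℕ))) →
    ∃ ε : E → ℤ, (∀ e, ε e = 1 ∨ ε e = -1) ∧
      ∀ v, ∑ e ∈ Q, ε e * ((if s e = v then 1 else 0) - (if t e = v then 1 else 0)) = 0 := by
  intro n
  induction n with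
  | zero =>
    intro Q s t hQ _
    rw [Finset.card_eq_zero] at hQ
    subst hQ
    exact ⟨fun _ => 1, by simp, by simp⟩
  | succ n ih =>
    intro Q s t hQ hev
    obtain ⟨e, he⟩ : Q.Nonempty := by rw [← Finset.card_pos]; omega
    by_cases hst : s e = t e
    · obtain ⟨ε, h1, h2⟩ := ih (Q.erase e) s t (by rw [Finset.card_erase_of_mem he]; omega) (by
        intro v
        have := hev v
        rw [← Finset.add_sum_erase _ _ he, hst] at this
        rw [Nat.even_add] at this
        exact this.1 (Even.add_self _))
      refine ⟨ε, h1, fun v => ?_⟩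
      rw [← Finset.add_sum_erase _ _ he, h2 v, hst]
      ring
    · obtain ⟨e', he', ho⟩ : ∃ e' ∈ Q.erase e,
          Odd ((if s e' = t e then 1 else 0) + (if t e' = t e then 1 else 0) : ℕ) := by
        by_contra hcon
        push Not at hcon
        have h1 := hev (t e)
        rw [← Finset.add_sum_erase _ _ he] at h1
        have h2 : Even (∑ e' ∈ Q.erase e,
          ((if s e' = t e then 1 else 0) + (if t e' = t e then 1 else 0) : ℕ)) :=
          Finset.even_sum _ (fun x hx => by simpa using hcon x hx)
        simp only [hst, if_true, if_false] at h1
        rw [Nat.even_add] at h1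
        have := h1.2 h2
        simp at this
      obtain ⟨Q0, hQ0⟩ : ∃ Q0, Q0 = (Q.erase e).erase e' := ⟨_, rfl⟩
      have hee : e' ≠ e := Finset.ne_of_mem_erase he'
      have hn1 : e ∉ Q0 := by rw [hQ0]; simp
      have hn2 : e' ∉ Q0 := by rw [hQ0]; simp
      have hc : (insert e Q0).card = n := by
        rw [Finset.card_insert_of_notMem hn1, hQ0, Finset.card_erase_of_mem he',
          Finset.card_erase_of_mem he]
        have : 0 < (Q.erase e).card := Finset.card_pos.2 ⟨_, he'⟩
        rw [Finset.card_erase_of_mem he] at this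
        omega
      have hQe : Q = insert e (insert e' Q0) := by
        rw [hQ0, Finset.insert_erase he', Finset.insert_erase he]
      have hn3 : e ∉ insert e' Q0 := by simp [hn1, hee.symm]
      subst hQe
      clear hQ0 he he' hQ
      have key : ∀ u : V, ∀ w : V, (∑ x ∈ Q0, ((if s x = w then 1 else 0) +
          (if (Function.update t e u) x = w then 1 else 0) : ℕ)) =
          ∑ x ∈ Q0, ((if s x = w then 1 else 0) + (if t x = w then 1 else 0) : ℕ) := by
        intro u w
        refine Finset.sum_congr rfl (fun x hx => ?_)
        rw [Function.update_of_ne (by rintro rfl; exact hn1 hx)]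
      have key2 : ∀ u : V, ∀ w : V, ∀ ε : E → ℤ, ∀ c, (∑ x ∈ Q0, (Function.update ε e' c) x * ((if s x = w then 1 else 0) -
          (if t x = w then 1 else 0) : ℤ)) =
          ∑ x ∈ Q0, ε x * ((if s x = w then 1 else 0) - (if (Function.update t e u) x = w then 1 else 0) : ℤ) := by
        intro u w ε c
        refine Finset.sum_congr rfl (fun x hx => ?_)
        rw [Function.update_of_ne (by rintro rfl; exact hn2 hx), Function.update_of_ne (by rintro rfl; exact hn1 hx)]
      by_cases hs : s e' = t e
      · obtain ⟨ε, h1, h2⟩ := ih (insert e Q0) s (Function.update t e (t e')) hc (by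
          intro w
          have := hev w
          rw [Finset.sum_insert hn3, Finset.sum_insert hn2] at this
          rw [Finset.sum_insert hn1, key, Function.update_self]
          rw [hs] at this
          generalize (∑ x ∈ Q0, _ : ℕ) = A at *
          grind)
        refine ⟨Function.update ε e' (ε e), ?_, ?_⟩
        · intro x
          by_cases hx : x = e'
          · subst hx; simpa using h1 e
          · rw [Function.update_of_ne hx]; exact h1 x
        · intro w
          have := h2 w
          rw [Finset.sum_insert hn3, Finset.sum_insert hn2, key2 (t e')]
          rw [Finset.sum_insert hn1, Function.update_self] at this
          rw [Function.update_self, Function.update_of_ne hee.symm, hs]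
          linear_combination this
      · have ht : t e' = t e := by
          by_contra ht
          simp [hs, ht] at ho
        obtain ⟨ε, h1, h2⟩ := ih (insert e Q0) s (Function.update t e (s e')) hc (by
          intro w
          have := hev w
          rw [Finset.sum_insert hn3, Finset.sum_insert hn2] at this
          rw [Finset.sum_insert hn1, key, Function.update_self]
          rw [ht] at this
          generalize (∑ x ∈ Q0, _ : ℕ) = A at *
          grind)
        refine ⟨Function.update ε e' (- ε e), ?_, ?_⟩
        · intro x
          by_cases hx : x = e'
          · subst hx
            rw [Function.update_self]
            rcases h1 e with h | h <;> simp [h]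
          · rw [Function.update_of_ne hx]; exact h1 x
        · intro w
          have := h2 w
          rw [Finset.sum_insert hn3, Finset.sum_insert hn2, key2 (s e')]
          rw [Finset.sum_insert hn1, Function.update_self] at this
          rw [Function.update_self, Function.update_of_ne hee.symm, ht]
          linear_combination this

lemma partB {E V : Type*} [Fintype E] [DecidableEq E] [DecidableEq V] (a b : E → V)
    (hreg : ∀ v, ∑ e, ((if a e = v then 1 else 0) + (if b e = v then 1 else 0) : ℕ) = 5)
    (N2 N3 : Finset E) (hdis : Disjoint N2 N3)
    (hN : ∀ v, (∑ e ∈ N2, ((if a e = v then 1 else 0) + (if b e = v then 1 else 0) : ℕ) = 2 ∧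
        ∑ e ∈ N3, ((if a e = v then 1 else 0) + (if b e = v then 1 else 0) : ℕ) = 0) ∨
      (∑ e ∈ N2, ((if a e = v then 1 else 0) + (if b e = v then 1 else 0) : ℕ) = 0 ∧
        ∑ e ∈ N3, ((if a e = v then 1 else 0) + (if b e = v then 1 else 0) : ℕ) = 3)) :
    ∃ f : E → ℤ, (∀ e, f e ≠ 0 ∧ |f e| ≤ 5) ∧
      ∀ v, ∑ e, f e * ((if a e = v then 1 else 0) + (if b e = v then 1 else 0)) = 0 := by
  obtain ⟨P, hP⟩ : ∃ P : Finset E, P = (N2 ∪ N3)ᶜ := ⟨_, rfl⟩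
  have hsplit : ∀ {M : Type} [AddCommMonoid M] (g : E → M), ∑ e, g e = ∑ e ∈ P, g e + (∑ e ∈ N2, g e + ∑ e ∈ N3, g e) := by
    intro M _ g
    rw [← Finset.sum_union hdis, hP, Finset.sum_compl_add_sum]
  obtain ⟨ε, hε, hε0⟩ := EO_aux _ N2 a b rfl (by
    intro v
    rcases hN v with h | h <;> rw [h.1] <;> decide)
  let x : E → V := fun e => if ε e = 1 then a e else b e
  let y : E → V := fun e => if ε e = 1 then b e else a e
  have hxy : ∀ e v, ((if x e = v then 1 else 0) + (if y e = v then 1 else 0) : ℤ) =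
     (if a e = v then 1 else 0) + (if b e = v then 1 else 0) := by
    intro e v
    simp only [x, y]
    split_ifs <;> simp_all
  have hx : ∀ e v, (2 * (if x e = v then 1 else 0) : ℤ) =
     ((if a e = v then 1 else 0) + (if b e = v then 1 else 0)) + ε e * ((if a e = v then 1 else 0) - (if b e = v then 1 else 0)) := by
    intro e v
    rcases hε e with h | h
    · have : x e = a e := by simp [x, h]
      rw [this, h]; ring
    · have : x e = b e := by simp [x, h]
      rw [this, h]; ring
  have hX : ∀ v, (2 * ∑ e ∈ N2, (if x e = v then 1 else 0) : ℕ) =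
      ∑ e ∈ N2, ((if a e = v then 1 else 0) + (if b e = v then 1 else 0) : ℕ) := by
    intro v
    zify
    rw [Finset.mul_sum, Finset.sum_congr rfl (fun e _ => hx e v), Finset.sum_add_distrib, hε0, add_zero]
  have hY : ∀ v, (∑ e ∈ N2, (if x e = v then 1 else 0) + ∑ e ∈ N2, (if y e = v then 1 else 0) : ℕ) =
      ∑ e ∈ N2, ((if a e = v then 1 else 0) + (if b e = v then 1 else 0) : ℕ) := by
    intro v
    zify
    rw [← Finset.sum_add_distrib, Finset.sum_congr rfl (fun e _ => hxy e v)]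
  obtain ⟨η, hη, hη0⟩ := EO_aux _ (P.disjSum (P.disjSum N2))
    (Sum.elim (fun e => (a e, true)) (Sum.elim (fun e => (b e, true)) (fun e => (x e, true))))
    (Sum.elim (fun e => (b e, false)) (Sum.elim (fun e => (a e, false)) (fun e => (y e, false)))) rfl (by
      rintro ⟨v, β⟩
      have h1 := hreg v
      have h2 := hX v
      have h3 := hY v
      have h4 := hN v
      rw [hsplit] at h1
      cases β <;>
      · simp only [Finset.sum_disjSum, Sum.elim_inl, Sum.elim_inr, Prod.mk.injEq, and_true, and_false, Bool.false_eq_true, Bool.true_eq_false, reduceCtorEq, if_false, add_zero, zero_add, Finset.sum_add_distrib, Finset.sum_const_zero] at h1 h2 h3 h4 ⊢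
        rw [Nat.even_iff]
        omega)
  have hv : ∀ v, ∑ e ∈ P, (η (.inl e) + η (.inr (.inl e))) * ((if a e = v then 1 else 0) + (if b e = v then 1 else 0))
      + ∑ e ∈ N2, η (.inr (.inr e)) * ((if a e = v then 1 else 0) + (if b e = v then 1 else 0)) = 0 := by
    intro v
    have h1 := hη0 (v, true)
    have h2 := hη0 (v, false)
    simp only [Finset.sum_disjSum, Sum.elim_inl, Sum.elim_inr, Prod.mk.injEq, and_true, and_false, Bool.false_eq_true, Bool.true_eq_false, reduceCtorEq, if_false, sub_zero, zero_sub] at h1 h2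
    simp only [← hxy]
    have h3 : ∑ e ∈ P, (η (.inl e) + η (.inr (.inl e))) * ((if x e = v then 1 else 0) + (if y e = v then 1 else 0)) = ∑ e ∈ P, (η (.inl e) + η (.inr (.inl e))) * ((if a e = v then 1 else 0) + (if b e = v then 1 else 0)) := by
      simp only [← hxy]
    rw [h3]
    simp only [mul_add, add_mul, Finset.sum_add_distrib, mul_neg, Finset.sum_neg_distrib] at *
    linarith
  have h2f : ∀ e : E, ∃ z : ℤ, (z ≠ 0 ∧ |z| ≤ 5) ∧ (e ∈ P → 2 * z = 6 + (η (.inl e) + η (.inr (.inl e)))) ∧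
      (e ∈ N2 → 2 * z = - 9 + η (.inr (.inr e))) ∧ (e ∈ N3 → 2 * z = - 4) := by
    intro e
    have hd : e ∈ N2 → e ∉ N3 := fun h => Finset.disjoint_left.1 hdis h
    have hp : e ∈ P ↔ (e ∉ N2 ∧ e ∉ N3) := by rw [hP]; simp
    by_cases h2 : e ∈ N2
    · rcases hη (.inr (.inr e)) with h | h
      · exact ⟨-4, by norm_num, by tauto, by rw [h]; norm_num, by tauto⟩
      · exact ⟨-5, by norm_num, by tauto, by rw [h]; norm_num, by tauto⟩
    · by_cases h3 : e ∈ N3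
      · exact ⟨-2, by norm_num, by tauto, by tauto, by norm_num⟩
      · rcases hη (.inl e) with h | h <;> rcases hη (.inr (.inl e)) with h' | h'
        · exact ⟨4, by norm_num, by rw [h, h']; norm_num, by tauto, by tauto⟩
        · exact ⟨3, by norm_num, by rw [h, h']; norm_num, by tauto, by tauto⟩
        · exact ⟨3, by norm_num, by rw [h, h']; norm_num, by tauto, by tauto⟩
        · exact ⟨2, by norm_num, by rw [h, h']; norm_num, by tauto, by tauto⟩
  choose f hf hfP hf2 hf3 using h2f
  refine ⟨f, hf, fun v => ?_⟩
  have e1 : ∑ e ∈ P, 2 * (f e * ((if a e = v then 1 else 0) + (if b e = v then 1 else 0))) =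
      6 * ∑ e ∈ P, ((if a e = v then 1 else 0) + (if b e = v then 1 else 0)) + ∑ e ∈ P, (η (.inl e) + η (.inr (.inl e))) * ((if a e = v then 1 else 0) + (if b e = v then 1 else 0)) := by
    rw [Finset.mul_sum, ← Finset.sum_add_distrib]
    refine Finset.sum_congr rfl fun e he => ?_
    rw [← mul_assoc, hfP e he]; ring
  have e2 : ∑ e ∈ N2, 2 * (f e * ((if a e = v then 1 else 0) + (if b e = v then 1 else 0))) =
      -9 * ∑ e ∈ N2, ((if a e = v then 1 else 0) + (if b e = v then 1 else 0)) + ∑ e ∈ N2, (η (.inr (.inr e))) * ((if a e = v then 1 else 0) + (if b e = v then 1 else 0)) := by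
    rw [Finset.mul_sum, ← Finset.sum_add_distrib]
    refine Finset.sum_congr rfl fun e he => ?_
    rw [← mul_assoc, hf2 e he]; ring
  have e3 : ∑ e ∈ N3, 2 * (f e * ((if a e = v then 1 else 0) + (if b e = v then 1 else 0))) =
      -4 * ∑ e ∈ N3, ((if a e = v then 1 else 0) + (if b e = v then 1 else 0)) := by
    rw [Finset.mul_sum]
    refine Finset.sum_congr rfl fun e he => ?_
    rw [← mul_assoc, hf3 e he]
  have h1 := hreg v
  have h4 := hN v
  have h5 := hv v
  rw [hsplit] at h1
  zify at h1 h4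
  have h6 : 2 * ∑ e, f e * ((if a e = v then 1 else 0) + (if b e = v then 1 else 0)) = 0 := by
    rw [Finset.mul_sum, hsplit, e1, e2, e3]
    rcases h4 with h | h <;> rw [h.1, h.2] at h1 ⊢ <;> linarith
  omega

lemma tutte_weight {W : Type*} [Fintype W] [DecidableEq W] (G : SimpleGraph W) (w : W → W → ℕ)
    (hsymm : ∀ x y, w x y = w y x) (hadj : ∀ x y, x ≠ y → w x y ≠ 0 → G.Adj x y)
    (hdeg : ∀ x, ∑ y, w x y ≤ 5) (Z : Set W) (hZ : ∀ x ∈ Z, ∀ y ∈ Z, x ≠ y → G.Adj x y)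
    (hW : Even (Fintype.card W))
    (hC : ∀ C : Finset W, (∀ x ∈ C, x ∉ Z) → Odd C.card → 5 ≤ ∑ x ∈ C, ∑ y ∈ Cᶜ, w x y) :
    ∃ M : G.Subgraph, M.IsPerfectMatching := by
  classical
  rw [SimpleGraph.tutte]
  intro S hS
  unfold SimpleGraph.IsTutteViolator at hS
  set H := ((⊤ : G.Subgraph).deleteVerts S).coe with hH
  have hverts : ∀ x : W, x ∈ ((⊤ : G.Subgraph).deleteVerts S).verts ↔ x ∉ S := by
    intro x; simp
  have hHadj : ∀ x y, H.Adj x y ↔ G.Adj x.1 y.1 := by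
    intro x y
    have hx := (hverts x.1).1 x.2
    have hy := (hverts y.1).1 y.2
    simp [hH, hx, hy]
  let comp : H.ConnectedComponent → Finset W := fun c =>
    Finset.univ.filter (fun x => ∃ h : x ∈ ((⊤ : G.Subgraph).deleteVerts S).verts, H.connectedComponentMk ⟨x, h⟩ = c)
  have hcomp : ∀ c x, x ∈ comp c ↔ ∃ h : x ∈ ((⊤ : G.Subgraph).deleteVerts S).verts, H.connectedComponentMk ⟨x, h⟩ = c := by
    intro c x; simp [comp]
  have hcard : ∀ c : H.ConnectedComponent, (comp c).card = c.supp.ncard := by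
    intro c
    rw [← Set.ncard_coe_finset, ← Set.ncard_image_of_injective c.supp Subtype.val_injective]
    congr 1
    ext x
    simp only [Finset.mem_coe, hcomp, Set.mem_image, SimpleGraph.ConnectedComponent.mem_supp_iff]
    constructor
    · rintro ⟨h, hc⟩; exact ⟨⟨x, h⟩, hc, rfl⟩
    · rintro ⟨y, hc, rfl⟩; exact ⟨y.2, hc⟩
  have hdisj : ∀ c c' x, x ∈ comp c → x ∈ comp c' → c = c' := by
    intro c c' x h h'
    rw [hcomp] at h h'
    obtain ⟨h1, rfl⟩ := h
    obtain ⟨h2, rfl⟩ := h'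
    rfl
  let K : Finset H.ConnectedComponent := Finset.univ.filter (fun c => Odd (comp c).card)
  have hK : K.card = H.oddComponents.ncard := by
    rw [← Set.ncard_coe_finset]
    congr 1
    ext c
    simp [K, SimpleGraph.oddComponents, hcard]
  let K1 := K.filter (fun c => ∀ x ∈ comp c, x ∉ Z)
  have hK1 : K.card ≤ K1.card + 1 := by
    have h1 : (K.filter (fun c => ¬ ∀ x ∈ comp c, x ∉ Z)).card ≤ 1 := by
      rw [Finset.card_le_one]
      intro c hc c' hc'
      have hc2 := (Finset.mem_filter.1 hc).2
      have hc2' := (Finset.mem_filter.1 hc').2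
      push Not at hc2 hc2'
      obtain ⟨x, hx, hxZ⟩ := hc2
      obtain ⟨y, hy, hyZ⟩ := hc2'
      by_cases hxy : x = y
      · subst hxy; exact hdisj _ _ _ hx hy
      · have ha := hZ x hxZ y hyZ hxy
        obtain ⟨h1, rfl⟩ := (hcomp _ _).1 hx
        obtain ⟨h2, rfl⟩ := (hcomp _ _).1 hy
        rw [SimpleGraph.ConnectedComponent.eq]
        exact ((hHadj ⟨x, h1⟩ ⟨y, h2⟩).2 ha).reachable
    have h2 := Finset.card_filter_add_card_filter_not (s := K) (fun c => ∀ x ∈ comp c, x ∉ Z)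
    change K.card ≤ (K.filter (fun c => ∀ x ∈ comp c, x ∉ Z)).card + 1
    omega
  have hpar : K.card % 2 = (Fintype.card W - S.ncard) % 2 := by
    have h1 := SimpleGraph.odd_ncard_oddComponents H
    rw [← hK] at h1
    have h2 : Nat.card ((⊤ : G.Subgraph).deleteVerts S).verts = Fintype.card W - S.ncard := by
      have : ((⊤ : G.Subgraph).deleteVerts S).verts = Sᶜ := by
        ext x; exact hverts x
      rw [this, Nat.card_coe_set_eq, Set.ncard_compl, Nat.card_eq_fintype_card]
    rw [h2] at h1
    rw [Nat.odd_iff, Nat.odd_iff] at h1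
    omega
  have hSle : S.ncard ≤ Fintype.card W := by
    rw [← Nat.card_eq_fintype_card]; exact Set.ncard_le_card S
  have hw : 5 * K1.card ≤ 5 * S.ncard := by
    calc 5 * K1.card = ∑ c ∈ K1, 5 := by simp [mul_comm]
      _ ≤ ∑ c ∈ K1, ∑ x ∈ comp c, ∑ y ∈ (comp c)ᶜ, w x y := by
        refine Finset.sum_le_sum fun c hc => hC _ (Finset.mem_filter.1 hc).2 ?_
        exact (Finset.mem_filter.1 (Finset.mem_filter.1 hc).1).2
      _ ≤ ∑ c ∈ K1, ∑ x ∈ comp c, ∑ y ∈ S.toFinset, w x y := by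
        refine Finset.sum_le_sum fun c hc => Finset.sum_le_sum fun x hx => ?_
        refine Finset.sum_le_sum_of_ne_zero fun y hy hxy => ?_
        by_contra hyS
        rw [Set.mem_toFinset] at hyS
        rw [Finset.mem_compl] at hy
        have hne : x ≠ y := by rintro rfl; exact hy hx
        have ha := hadj x y hne hxy
        apply hy
        obtain ⟨h1, rfl⟩ := (hcomp _ _).1 hx
        refine (hcomp _ _).2 ⟨(hverts y).2 hyS, ?_⟩
        rw [SimpleGraph.ConnectedComponent.eq]
        exact ((hHadj ⟨y, (hverts y).2 hyS⟩ ⟨x, h1⟩).2 ha.symm).reachable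
      _ = ∑ x ∈ K1.biUnion comp, ∑ y ∈ S.toFinset, w x y := by
        rw [Finset.sum_biUnion]
        intro c _ c' _ hne
        rw [Function.onFun, Finset.disjoint_left]
        intro x hx hx'
        exact hne (hdisj _ _ _ hx hx')
      _ ≤ ∑ x, ∑ y ∈ S.toFinset, w x y :=
        Finset.sum_le_sum_of_subset (Finset.subset_univ _)
      _ = ∑ y ∈ S.toFinset, ∑ x, w y x := by
        rw [Finset.sum_comm]
        simp only [hsymm]
      _ ≤ ∑ y ∈ S.toFinset, 5 := Finset.sum_le_sum fun y _ => hdeg y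
      _ = 5 * S.ncard := by
        rw [Set.ncard_eq_toFinset_card', Finset.sum_const, smul_eq_mul, mul_comm]
  rw [← hK] at hS
  rw [Nat.even_iff] at hW
  omega

def auxRel {V D : Type*} (tail : D → V) (flip : D → D) (r : ℕ) :
    D ⊕ ((V × Bool) ⊕ Fin r) → D ⊕ ((V × Bool) ⊕ Fin r) → Prop
  | .inl d, .inl d' => flip d = d' ∨ (flip d = d ∧ flip d' = d')
  | .inl d, .inr (.inl p) => tail d = p.1
  | .inl d, .inr (.inr _) => flip d = d
  | _, _ => False

def auxW {V D : Type*} [DecidableEq V] [DecidableEq D] (tail : D → V) (flip : D → D) (r : ℕ) :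
    D ⊕ ((V × Bool) ⊕ Fin r) → D ⊕ ((V × Bool) ⊕ Fin r) → ℕ
  | .inl d, .inl d' => if flip d = d' ∧ d ≠ d' then 3 else 0
  | .inl d, .inr (.inl p) => if tail d = p.1 then 1 else 0
  | .inr (.inl p), .inl d => if tail d = p.1 then 1 else 0
  | _, _ => 0

lemma T3_cut {V D : Type*} [Fintype V] [Fintype D] [DecidableEq V] [DecidableEq D]
    (tail : D → V) (flip : D → D) (hflip : ∀ d, flip (flip d) = d)
    (h5 : ∀ v, (Finset.univ.filter (fun d => tail d = v)).card = 5)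
    (hY : ∀ Y : Finset V, (∀ d, flip d = d → tail d ∉ Y) →
      (Finset.univ.filter (fun d => tail d ∈ Y ∧ tail (flip d) ∉ Y)).card ≠ 1) (r : ℕ)
    (C : Finset (D ⊕ ((V × Bool) ⊕ Fin r))) (hC1 : ∀ d, flip d = d → Sum.inl d ∉ C)
    (hC2 : ∀ x, Sum.inr (Sum.inr x) ∉ C) (hodd : Odd C.card) :
    5 ≤ ∑ x ∈ C, ∑ y ∈ Cᶜ, auxW tail flip r x y := by
  classical
  let J : Finset D := Finset.univ.filter (fun d => Sum.inl d ∈ C)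
  let I : Finset (V × Bool) := Finset.univ.filter (fun p => Sum.inr (Sum.inl p) ∈ C)
  have hJ : ∀ d, Sum.inl d ∈ C ↔ d ∈ J := by intro d; simp [J]
  have hI : ∀ d, Sum.inr (Sum.inl d) ∈ C ↔ d ∈ I := by intro d; simp [I]
  let j : V → ℕ := fun v => ∑ d, if d ∈ J ∧ tail d = v then 1 else 0
  let nj : V → ℕ := fun v => ∑ d, if d ∉ J ∧ tail d = v then 1 else 0
  let i : V → ℕ := fun v => ∑ β, if (v, β) ∈ I then 1 else 0
  let ni : V → ℕ := fun v => ∑ β, if (v, β) ∉ I then 1 else 0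
  have hj : ∀ v, j v + nj v = 5 := by
    intro v
    rw [← h5 v, Finset.card_filter]
    simp only [j, nj, ← Finset.sum_add_distrib]
    refine Finset.sum_congr rfl fun d _ => ?_
    by_cases h1 : d ∈ J <;> by_cases h2 : tail d = v <;> simp [h1, h2]
  have hi : ∀ v, i v + ni v = 2 := by
    intro v
    simp only [i, ni, ← Finset.sum_add_distrib]
    rw [Fintype.sum_bool]
    split_ifs <;> simp_all
  let eps : Finset D := Finset.univ.filter (fun d => d ∈ J ∧ flip d ∉ J)
  have htot : ∑ x ∈ C, ∑ y ∈ Cᶜ, auxW tail flip r x y = 3 * eps.card + ∑ v, (j v * ni v + i v * nj v) := by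
    have e0 : ∑ x ∈ C, ∑ y ∈ Cᶜ, auxW tail flip r x y =
        ∑ x, ∑ y, if x ∈ C ∧ y ∉ C then auxW tail flip r x y else 0 := by
      rw [← Finset.sum_filter_add_sum_filter_not Finset.univ (fun x => x ∈ C)]
      rw [Finset.sum_eq_zero (s := Finset.univ.filter (fun x => ¬ x ∈ C)), add_zero]
      · refine Finset.sum_congr (by simp) fun x hx => ?_
        rw [← Finset.sum_filter]
        refine Finset.sum_congr ?_ fun _ _ => rfl
        have hx : x ∈ C := by simpa using hx
        ext y; simp [hx]
      · intro x hx
        simp only [Finset.mem_filter, Finset.mem_univ, true_and] at hx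
        simp [hx]
    rw [e0]
    simp only [Fintype.sum_sum_type, hJ, hI, hC2, auxW, false_and, if_false, Finset.sum_const_zero, add_zero, ite_self]
    rw [Finset.sum_add_distrib, Finset.sum_add_distrib, add_assoc]
    congr 1
    · rw [Finset.card_filter, Finset.mul_sum]
      refine Finset.sum_congr rfl fun d _ => ?_
      rw [Finset.sum_eq_single (flip d)]
      · by_cases h1 : d ∈ J <;> by_cases h2 : flip d ∈ J
        · simp [h1, h2]
        · have : d ≠ flip d := by intro h; rw [← h] at h2; exact h2 h1
          simp [h1, h2, this]
        · simp [h1, h2]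
        · simp [h1, h2]
      · intro d' _ hd'
        simp [Ne.symm hd']
      · simp
    · congr 1
      · simp only [j, ni, Finset.sum_mul_sum, Fintype.sum_prod_type]
        rw [Finset.sum_comm]
        refine Finset.sum_congr rfl fun v _ => Finset.sum_congr rfl fun d _ => Finset.sum_congr rfl fun β _ => ?_
        by_cases h1 : d ∈ J <;> by_cases h2 : (v, β) ∈ I <;> by_cases h3 : tail d = v <;> simp [h1, h2, h3]
      · simp only [i, nj, Finset.sum_mul_sum, Fintype.sum_prod_type]
        refine Finset.sum_congr rfl fun v _ => Finset.sum_congr rfl fun β _ => Finset.sum_congr rfl fun d _ => ?_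
        by_cases h1 : d ∈ J <;> by_cases h2 : (v, β) ∈ I <;> by_cases h3 : tail d = v <;> simp [h1, h2, h3]
  rw [htot]
  by_contra hlt
  push Not at hlt
  have hcv : ∀ v, j v * ni v + i v * nj v ≤ ∑ v, (j v * ni v + i v * nj v) := fun v =>
    Finset.single_le_sum (f := fun v => j v * ni v + i v * nj v) (fun _ _ => Nat.zero_le _) (Finset.mem_univ v)
  have hi1 : ∀ v, i v = 0 ∨ i v = 2 := by
    intro v
    have h1 := hi v
    have h2 := hj v
    have h3 := hcv v
    have : i v ≠ 1 := by
      intro h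
      have h' : ni v = 1 := by omega
      rw [h, h'] at h3
      omega
    omega
  have hIcard : Even I.card := by
    have : I.card = ∑ v, i v := by
      rw [← Fintype.sum_prod_type (f := fun p => if p ∈ I then 1 else 0)]
      simp
    rw [this]
    exact Finset.even_sum _ fun v _ => by rcases hi1 v with h | h <;> rw [h] <;> decide
  have hCcard : C.card = J.card + I.card := by
    have : C.card = ∑ x, if x ∈ C then 1 else 0 := by simp
    rw [this]
    simp only [Fintype.sum_sum_type, hJ, hI, hC2, if_false, Finset.sum_const_zero, add_zero]
    simp
  have hJe : Even (J.card + eps.card) := by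
    have h1 : J.card = eps.card + (J.filter (fun d => flip d ∈ J)).card := by
      rw [← Finset.card_filter_add_card_filter_not (s := J) (fun d => flip d ∈ J), add_comm]
      congr 2
      ext d; simp [eps]
    have h2 : Even (J.filter (fun d => flip d ∈ J)).card := by
      have : ∑ d ∈ J.filter (fun d => flip d ∈ J), (1 : ZMod 2) = 0 := by
        refine Finset.sum_involution (fun d _ => flip d) ?_ ?_ ?_ ?_
        · intros; decide
        · intro d hd _ h
          exact hC1 d h ((hJ d).2 (Finset.mem_filter.1 hd).1)
        · intro d hd
          rw [Finset.mem_filter] at hd ⊢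
          exact ⟨hd.2, by rw [hflip]; exact hd.1⟩
        · intro d _; exact hflip d
      rw [Finset.sum_const, nsmul_eq_mul, mul_one, ZMod.natCast_eq_zero_iff] at this
      exact even_iff_two_dvd.2 this
    rw [Nat.even_iff] at h2 ⊢
    omega
  have heps : eps.card = 1 := by
    rw [Nat.even_iff] at hIcard hJe
    rw [Nat.odd_iff] at hodd
    omega
  have hij : ∀ v, (i v = 0 ∧ j v = 0) ∨ (i v = 2 ∧ nj v = 0) := by
    intro v
    have h1 := hi v
    have h2 := hj v
    have h3 := hcv v
    rcases hi1 v with h | h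
    · left
      have h' : ni v = 2 := by omega
      rw [h, h'] at h3
      omega
    · right
      have h' : ni v = 0 := by omega
      rw [h, h'] at h3
      omega
  let Y : Finset V := Finset.univ.filter (fun v => i v = 2)
  have hdY : ∀ d, d ∈ J ↔ tail d ∈ Y := by
    intro d
    simp only [Y, Finset.mem_filter, Finset.mem_univ, true_and]
    constructor
    · intro hd
      rcases hij (tail d) with h | h
      · have := Finset.sum_eq_zero_iff.1 h.2 d (Finset.mem_univ d)
        simp [hd] at this
      · exact h.1
    · intro hd
      by_contra hdn
      rcases hij (tail d) with h | h
      · omega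
      · have := Finset.sum_eq_zero_iff.1 h.2 d (Finset.mem_univ d)
        simp [hdn] at this
  refine hY Y ?_ ?_
  · intro d hd h
    exact hC1 d hd ((hJ d).2 ((hdY d).2 h))
  · rw [← heps]
    congr 1
    ext d
    simp [eps, hdY]

lemma T3 {V D : Type*} [Fintype V] [Fintype D] [DecidableEq V] [DecidableEq D]
    (tail : D → V) (flip : D → D) (hflip : ∀ d, flip (flip d) = d)
    (h5 : ∀ v, (Finset.univ.filter (fun d => tail d = v)).card = 5)
    (hY : ∀ Y : Finset V, (∀ d, flip d = d → tail d ∉ Y) →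
      (Finset.univ.filter (fun d => tail d ∈ Y ∧ tail (flip d) ∉ Y)).card ≠ 1) :
    ∃ N : Finset D, (∀ d, d ∈ N → flip d ∈ N) ∧ ∀ v, (N.filter (fun d => tail d = v)).card = 3 := by
  classical
  obtain ⟨r, hr⟩ : ∃ r, r = Fintype.card V % 2 := ⟨_, rfl⟩
  let G := SimpleGraph.fromRel (auxRel tail flip r)
  have hD : Fintype.card D = 5 * Fintype.card V := by
    rw [← Finset.card_univ, Finset.card_eq_sum_card_fiberwise (f := tail) (t := Finset.univ) (by simp)]
    rw [Finset.sum_congr rfl (fun v _ => h5 v)]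
    simp [mul_comm]
  obtain ⟨M, hM⟩ := tutte_weight G (auxW tail flip r) (by
      rintro (d | p | x) (d' | p' | x') <;> simp only [auxW]
      congr 1
      rw [eq_iff_iff]
      constructor
      · rintro ⟨rfl, h⟩; exact ⟨hflip _, h.symm⟩
      · rintro ⟨rfl, h⟩; exact ⟨hflip _, h.symm⟩)
    (by
      intro x y hxy hw
      refine (SimpleGraph.fromRel_adj _ _ _).2 ⟨hxy, ?_⟩
      rcases x with (d | p | x) <;> rcases y with (d' | p' | x') <;> simp [auxW, auxRel] at hw ⊢ <;> tauto)
    (by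
      rintro (d | p | x) <;> simp only [Fintype.sum_sum_type, auxW, Finset.sum_const_zero, add_zero, zero_add]
      · have h1 : ∑ d', (if flip d = d' ∧ d ≠ d' then 3 else 0) ≤ 3 := by
          calc _ ≤ ∑ d', (if flip d = d' then 3 else 0) := by
                refine Finset.sum_le_sum fun d' _ => ?_
                split_ifs <;> simp_all
            _ = 3 := by simp
        have h2 : ∑ p : V × Bool, (if tail d = p.1 then 1 else 0) = 2 := by
          rw [Fintype.sum_prod_type]
          simp only [Fintype.sum_bool]
          rw [Finset.sum_add_distrib]
          simp
        omega
      · have := h5 p.1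
        rw [Finset.card_filter] at this
        omega
      · omega)
    ({x | ∃ d, flip d = d ∧ x = .inl d} ∪ {x | ∃ t, x = .inr (.inr t)})
    (by
      have hs : ∀ t t' : Fin r, t = t' := by
        intro t t'
        have := t.2
        have := t'.2
        ext
        omega
      intro x hx y hy hxy
      refine (SimpleGraph.fromRel_adj _ _ _).2 ⟨hxy, ?_⟩
      rcases hx with ⟨d, hd, rfl⟩ | ⟨t, rfl⟩ <;> rcases hy with ⟨d', hd', rfl⟩ | ⟨t', rfl⟩
      · left; right; exact ⟨hd, hd'⟩
      · left; exact hd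
      · right; exact hd'
      · exact absurd (by rw [hs t t']) hxy)
    (by
      simp only [Fintype.card_sum, Fintype.card_prod, Fintype.card_bool, Fintype.card_fin, hD]
      rw [Nat.even_iff]
      omega)
    (by
      intro C hCZ hodd
      refine T3_cut tail flip hflip h5 hY r C ?_ ?_ hodd
      · intro d hd hdC
        exact hCZ _ hdC (Or.inl ⟨d, hd, rfl⟩)
      · intro t htC
        exact hCZ _ htC (Or.inr ⟨t, rfl⟩))
  rw [SimpleGraph.Subgraph.isPerfectMatching_iff] at hM
  have hpc : ∀ d p, M.Adj (.inl d) (.inr (.inl p)) → tail d = p.1 := by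
    intro d p h
    have := M.adj_sub h
    simpa [G, auxRel] using this
  have hcore : ∀ p, ∃ d, M.Adj (.inl d) (.inr (.inl p)) := by
    intro p
    obtain ⟨y, hy, -⟩ := hM (.inr (.inl p))
    have ha := M.adj_sub hy
    rcases y with d | q | t
    · exact ⟨d, hy.symm⟩
    · simp [G, auxRel] at ha
    · simp [G, auxRel] at ha
  choose g hg using hcore
  refine ⟨Finset.univ.filter (fun d => ¬ ∃ p, M.Adj (.inl d) (.inr (.inl p))), ?_, ?_⟩
  · intro d hd
    simp only [Finset.mem_filter, Finset.mem_univ, true_and] at hd ⊢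
    by_cases hfd : flip d = d
    · rwa [hfd]
    · obtain ⟨y, hy, -⟩ := hM (.inl d)
      have ha := M.adj_sub hy
      rcases y with d' | q | t
      · have : d' = flip d := by
          simp only [G, SimpleGraph.fromRel_adj, auxRel] at ha
          rcases ha.2 with (h | h) | (h | h)
          · exact h.symm
          · exact absurd h.1 hfd
          · rw [← h, hflip]
          · exact absurd h.2 hfd
        subst this
        rintro ⟨p, hp⟩
        have := (hM (.inl (flip d))).unique hp hy.symm
        simp at this
      · exact absurd ⟨q, hy⟩ hd
      · simp [G, auxRel] at ha
        exact absurd ha hfd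
  · intro v
    have h1 := h5 v
    rw [← Finset.card_filter_add_card_filter_not (fun d => ∃ p, M.Adj (.inl d) (.inr (.inl p)))] at h1
    have h2 : ((Finset.univ.filter (fun d => tail d = v)).filter (fun d => ∃ p, M.Adj (.inl d) (.inr (.inl p)))).card = 2 := by
      have : (Finset.univ.filter (fun d => tail d = v)).filter (fun d => ∃ p, M.Adj (.inl d) (.inr (.inl p)))
          = Finset.univ.image (fun β : Bool => g (v, β)) := by
        ext d
        simp only [Finset.mem_filter, Finset.mem_univ, true_and, Finset.mem_image]
        constructor
        · rintro ⟨rfl, ⟨w, β⟩, hp⟩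
          have hw := hpc _ _ hp
          simp only at hw
          subst hw
          refine ⟨β, ?_⟩
          have := (hM (.inr (.inl (tail d, β)))).unique (hg (tail d, β)).symm hp.symm
          simpa using this
        · rintro ⟨β, rfl⟩
          exact ⟨hpc _ _ (hg (v, β)), _, hg (v, β)⟩
      rw [this, Finset.card_image_of_injective, Finset.card_univ, Fintype.card_bool]
      intro β β' h
      simp only at h
      have h3 := hg (v, β)
      rw [h] at h3
      have := (hM _).unique h3 (hg (v, β'))
      simpa using this
    have h3 : (Finset.univ.filter (fun d => ¬ ∃ p, M.Adj (.inl d) (.inr (.inl p)))).filter (fun d => tail d = v) =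
       (Finset.univ.filter (fun d => tail d = v)).filter (fun d => ¬ ∃ p, M.Adj (.inl d) (.inr (.inl p))) := by
      ext d
      simp only [Finset.mem_filter, Finset.mem_univ, true_and]
      tauto
    rw [h3]
    omega

lemma T3_U {V E : Type*} [Fintype V] [Fintype E] [DecidableEq V] [DecidableEq E] (a b : E → V)
    (hreg : ∀ v, ∑ e, ((if a e = v then 1 else 0) + (if b e = v then 1 else 0) : ℕ) = 5)
    (U : Finset V)
    (hU : ∀ Y : Finset V, Y ⊆ U → (∀ e, (a e ∈ Y ∨ b e ∈ Y) → (a e ∈ U ∧ b e ∈ U)) →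
      (Finset.univ.filter (fun e => ¬ (a e ∈ Y ↔ b e ∈ Y))).card ≠ 1) :
    ∃ N : Finset E, ∀ v ∈ U,
      ∑ e ∈ N, ((if a e = v then 1 else 0) + (if b e = v then 1 else 0) : ℕ) = 3 := by
  classical
  let tl : E × Bool → V := fun d => if d.2 then a d.1 else b d.1
  let D := {d : E × Bool // tl d ∈ U}
  let flip : D → D := fun d => if h : tl (d.1.1, !d.1.2) ∈ U then ⟨(d.1.1, !d.1.2), h⟩ else d
  have hflip1 : ∀ d : D, ∀ h : tl (d.1.1, !d.1.2) ∈ U, flip d = ⟨(d.1.1, !d.1.2), h⟩ := by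
    intro d h; simp only [flip, h, dif_pos]
  have hflip2 : ∀ d : D, tl (d.1.1, !d.1.2) ∉ U → flip d = d := by
    intro d h; simp only [flip, h, not_false_eq_true, dif_neg]
  have hsum : ∀ v, ∀ p : E → Prop, ∑ d : E × Bool, (if p d.1 ∧ tl d = v then 1 else 0 : ℕ) =
      ∑ e, if p e then ((if a e = v then 1 else 0) + (if b e = v then 1 else 0) : ℕ) else 0 := by
    intro v p
    rw [Fintype.sum_prod_type]
    refine Finset.sum_congr rfl fun e _ => ?_
    rw [Fintype.sum_bool]
    by_cases h : p e <;> simp [h, tl]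
  have hsub : ∀ v ∈ U, ∀ p : E × Bool → Prop, (Finset.univ.filter (fun d : D => p d.1 ∧ tl d.1 = v)).card =
      ∑ d : E × Bool, (if p d ∧ tl d = v then 1 else 0 : ℕ) := by
    intro v hv p
    rw [← Finset.card_filter]
    refine Finset.card_bij (fun d _ => d.1) ?_ ?_ ?_
    · intro d hd; simpa using hd
    · intro d _ d' _ h; exact Subtype.ext h
    · intro d hd
      have hd : p d ∧ tl d = v := by simpa using hd
      refine ⟨⟨d, by rw [hd.2]; exact hv⟩, by simpa using hd, rfl⟩
  obtain ⟨N, hN1, hN2⟩ := T3 (V := {v // v ∈ U}) (D := D) (fun d => ⟨tl d.1, d.2⟩) flip (by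
      intro d
      by_cases h : tl (d.1.1, !d.1.2) ∈ U
      · rw [hflip1 d h, hflip1]
        · simp
        · simpa using d.2
      · rw [hflip2 d h, hflip2 d h])
    (by
      rintro ⟨v, hv⟩
      have h1 := hsub v hv (fun _ => True)
      have h2 := hsum v (fun _ => True)
      simp only [true_and, if_true] at h1 h2
      simp only [Subtype.mk.injEq]
      rw [h1, h2, hreg])
    (by
      intro Y' hslot hcard
      let Y : Finset V := Y'.map (Function.Embedding.subtype _)
      have hYm : ∀ v (hv : v ∈ U), v ∈ Y ↔ (⟨v, hv⟩ : {v // v ∈ U}) ∈ Y' := by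
        intro v hv; simp [Y, hv]
      have hYU : Y ⊆ U := by
        intro v hv
        simp only [Y, Finset.mem_map] at hv
        obtain ⟨w, _, rfl⟩ := hv
        exact w.2
      have hd : ∀ d : E × Bool, tl d ∈ Y → tl (d.1, !d.2) ∈ U := by
        intro d hdY
        by_contra h
        exact hslot ⟨d, hYU hdY⟩ (hflip2 _ h) ((hYm _ _).1 hdY)
      have hab : ∀ e, (a e ∈ Y ∨ b e ∈ Y) → (a e ∈ U ∧ b e ∈ U) := by
        rintro e (h | h)
        · exact ⟨hYU h, by simpa [tl] using hd (e, true) (by simpa [tl] using h)⟩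
        · exact ⟨by simpa [tl] using hd (e, false) (by simpa [tl] using h), hYU h⟩
      refine hU Y hYU hab ?_
      rw [← hcard]
      symm
      have hmem : ∀ d : D, (((⟨tl d.1, d.2⟩ : {v // v ∈ U}) ∈ Y') ∧
          ((⟨tl (flip d).1, (flip d).2⟩ : {v // v ∈ U}) ∉ Y')) ↔ (tl d.1 ∈ Y ∧ tl (d.1.1, !d.1.2) ∉ Y) := by
        intro d
        rw [← hYm, ← hYm]
        refine and_congr_right fun h => ?_
        rw [hflip1 d (hd d.1 h)]
      refine Finset.card_bij (fun d _ => d.1.1) ?_ ?_ ?_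
      · rintro ⟨⟨e, β⟩, hdU⟩ hd
        rw [Finset.mem_filter, hmem] at hd
        have hd := hd.2
        rw [Finset.mem_filter]
        cases β <;> simp [tl] at hd ⊢ <;> tauto
      · rintro ⟨⟨e, β⟩, hdU⟩ hd ⟨⟨e', β'⟩, hdU'⟩ hd' he
        rw [Finset.mem_filter, hmem] at hd hd'
        have hd := hd.2
        have hd' := hd'.2
        simp only at he
        subst he
        cases β <;> cases β' <;> simp [tl] at hd hd' ⊢ <;> tauto
      · intro e he
        rw [Finset.mem_filter] at he
        have he := he.2
        by_cases ha : a e ∈ Y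
        · have hb : b e ∉ Y := by tauto
          refine ⟨⟨(e, true), by simpa [tl] using hYU ha⟩, ?_, rfl⟩
          rw [Finset.mem_filter, hmem]
          simp [tl, ha, hb]
        · have hb : b e ∈ Y := by tauto
          refine ⟨⟨(e, false), by simpa [tl] using hYU hb⟩, ?_, rfl⟩
          rw [Finset.mem_filter, hmem]
          simp [tl, ha, hb])
  refine ⟨Finset.univ.filter (fun e => ∃ d ∈ N, d.1.1 = e), fun v hv => ?_⟩
  rw [Finset.sum_filter]
  have h1 := hsum v (fun e => ∃ d' ∈ N, d'.1.1 = e)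
  have h2 := hsub v hv (fun d => ∃ d' ∈ N, d'.1.1 = d.1)
  refine Eq.trans (Eq.trans ?_ h1.symm) (h2.symm.trans (Eq.trans ?_ (hN2 ⟨v, hv⟩)))
  · exact Finset.sum_congr rfl fun e _ => by congr
  congr 1
  ext d
  simp only [Finset.mem_filter, Finset.mem_univ, true_and, Subtype.mk.injEq]
  refine and_congr_left fun _ => ⟨?_, fun h => ⟨d, h, rfl⟩⟩
  rintro ⟨d', hd', he⟩
  by_cases hβ : d'.1.2 = d.1.2
  · have : d' = d := Subtype.ext (Prod.ext he hβ)
    rwa [← this]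
  · have h1 : (d'.1.1, !d'.1.2) = d.1 := Prod.ext he (by
      cases h : d'.1.2 <;> cases h' : d.1.2 <;> simp_all)
    have h2 := hN1 d' hd'
    rw [hflip1 d' (by rw [h1]; exact d.2)] at h2
    have : (⟨(d'.1.1, !d'.1.2), by rw [h1]; exact d.2⟩ : D) = d := Subtype.ext h1
    rwa [← this]

lemma cut_parity {V E : Type*} [DecidableEq V] [DecidableEq E] (a b : E → V)
    (Y : Finset V) (N : Finset E) :
    Even (∑ v ∈ Y, ∑ e ∈ N, ((if a e = v then 1 else 0) + (if b e = v then 1 else 0) : ℕ) +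
      (N.filter (fun e => ¬ (a e ∈ Y ↔ b e ∈ Y))).card) := by
  rw [Finset.sum_comm, Finset.card_filter, ← Finset.sum_add_distrib]
  refine Finset.even_sum _ fun e _ => ?_
  rw [Finset.sum_add_distrib, Finset.sum_ite_eq, Finset.sum_ite_eq]
  by_cases h1 : a e ∈ Y <;> by_cases h2 : b e ∈ Y <;> simp [h1, h2]

lemma partD {V E : Type*} [Fintype V] [Fintype E] [DecidableEq V] [DecidableEq E] (a b : E → V)
    (hreg : ∀ v, ∑ e, ((if a e = v then 1 else 0) + (if b e = v then 1 else 0) : ℕ) = 5) :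
    ∃ N2 N3 : Finset E, Disjoint N2 N3 ∧
    ∀ v, (∑ e ∈ N2, ((if a e = v then 1 else 0) + (if b e = v then 1 else 0) : ℕ) = 2 ∧
        ∑ e ∈ N3, ((if a e = v then 1 else 0) + (if b e = v then 1 else 0) : ℕ) = 0) ∨
      (∑ e ∈ N2, ((if a e = v then 1 else 0) + (if b e = v then 1 else 0) : ℕ) = 0 ∧
        ∑ e ∈ N3, ((if a e = v then 1 else 0) + (if b e = v then 1 else 0) : ℕ) = 3) := by
  classical
  let dl : Finset V → Finset E := fun Y => Finset.univ.filter (fun e => ¬ (a e ∈ Y ↔ b e ∈ Y))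
  have hdl : ∀ Y e, e ∈ dl Y ↔ ¬ (a e ∈ Y ↔ b e ∈ Y) := by intro Y e; simp [dl]
  have hpar : ∀ Y, (dl Y).card % 2 = Y.card % 2 := by
    intro Y
    have h := cut_parity a b Y Finset.univ
    rw [Finset.sum_congr rfl (fun v _ => hreg v), Finset.sum_const, smul_eq_mul, Nat.even_iff] at h
    change (Y.card * 5 + (dl Y).card) % 2 = 0 at h
    omega
  have hsubm1 : ∀ X Y, (dl (X ∩ Y)).card + (dl (X ∪ Y)).card ≤ (dl X).card + (dl Y).card := by
    intro X Y
    simp only [dl, Finset.card_filter, ← Finset.sum_add_distrib]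
    refine Finset.sum_le_sum fun e _ => ?_
    by_cases h1 : a e ∈ X <;> by_cases h2 : b e ∈ X <;> by_cases h3 : a e ∈ Y <;>
      by_cases h4 : b e ∈ Y <;> simp [h1, h2, h3, h4]
  have hsubm2 : ∀ X Y, (dl (X \ Y)).card + (dl (Y \ X)).card ≤ (dl X).card + (dl Y).card := by
    intro X Y
    simp only [dl, Finset.card_filter, ← Finset.sum_add_distrib]
    refine Finset.sum_le_sum fun e _ => ?_
    by_cases h1 : a e ∈ X <;> by_cases h2 : b e ∈ X <;> by_cases h3 : a e ∈ Y <;>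
      by_cases h4 : b e ∈ Y <;> simp [h1, h2, h3, h4]
  let leaf : Finset V → Prop := fun X => Minimal (fun Y => (dl Y).card = 1) X
  have hleaf1 : ∀ X, leaf X → (dl X).card = 1 := fun X h => h.1
  have hleaf2 : ∀ X, leaf X → ∀ Y, Y ⊆ X → (dl Y).card = 1 → X ⊆ Y := fun X h Y hY h1 => h.2 h1 hY
  have huniq : ∀ X X' v, leaf X → leaf X' → v ∈ X → v ∈ X' → X = X' := by
    intro X X' v hX hX' hv hv'
    have h1 := hleaf1 X hX
    have h2 := hleaf1 X' hX'
    have p1 := hpar X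
    have p2 := hpar X'
    have p3 := hpar (X ∩ X')
    have p4 := hpar (X ∪ X')
    have p5 := hpar (X \ X')
    have p6 := hpar (X' \ X)
    have s1 := hsubm1 X X'
    have s2 := hsubm2 X X'
    have c1 := Finset.card_union_add_card_inter X X'
    have c2 := Finset.card_sdiff_add_card_inter X X'
    have c3 := Finset.card_sdiff_add_card_inter X' X
    rw [Finset.inter_comm X' X] at c3
    by_cases hodd : (X ∩ X').card % 2 = 1
    · have h : (dl (X ∩ X')).card = 1 := by omega
      have q1 := hleaf2 X hX _ Finset.inter_subset_left h
      have q2 := hleaf2 X' hX' _ Finset.inter_subset_right h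
      exact Finset.Subset.antisymm (fun x hx => (Finset.mem_inter.1 (q1 hx)).2)
        (fun x hx => (Finset.mem_inter.1 (q2 hx)).1)
    · have h : (dl (X \ X')).card = 1 := by omega
      have q1 := hleaf2 X hX _ Finset.sdiff_subset h
      exact absurd hv' (Finset.mem_sdiff.1 (q1 hv)).2
  have hex : ∀ Y, (dl Y).card = 1 → ∃ X ⊆ Y, leaf X := by
    intro Y hY
    obtain ⟨X, hXY, hX⟩ := exists_minimal_le_of_wellFoundedLT (fun Y => (dl Y).card = 1) Y hY
    exact ⟨X, hXY, hX⟩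
  let V0 : Finset V := Finset.univ.filter (fun v => ¬ ∃ X, leaf X ∧ v ∈ X)
  have hV0 : ∀ v, v ∈ V0 ↔ ¬ ∃ X, leaf X ∧ v ∈ X := by intro v; simp [V0]
  obtain ⟨N0, hN0⟩ := T3_U a b hreg V0 (by
    intro Y hY _ h1
    obtain ⟨X, hXY, hX⟩ := hex Y h1
    obtain ⟨e, he⟩ := Finset.card_pos.1 (by rw [hleaf1 X hX]; norm_num : 0 < (dl X).card)
    rw [hdl] at he
    obtain ⟨v, hv⟩ : ∃ v, v ∈ X := by
      by_cases h : a e ∈ X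
      · exact ⟨_, h⟩
      · exact ⟨b e, by tauto⟩
    exact (hV0 v).1 (hY (hXY hv)) ⟨X, hX, hv⟩)
  have hNX : ∀ X, ∃ N : Finset E, leaf X → ∀ v ∈ X,
      ∑ e ∈ N, ((if a e = v then 1 else 0) + (if b e = v then 1 else 0) : ℕ) = 3 := by
    intro X
    by_cases hX : leaf X
    · obtain ⟨N, hN⟩ := T3_U a b hreg X (by
        intro Y hY hin h1
        have hYX : Y = X := Finset.Subset.antisymm hY (hleaf2 X hX Y hY h1)
        subst hYX
        obtain ⟨e, he⟩ := Finset.card_pos.1 (by rw [hleaf1 Y hX]; norm_num : 0 < (dl Y).card)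
        rw [hdl] at he
        have := hin e
        tauto)
      exact ⟨N, fun _ => hN⟩
    · exact ⟨∅, fun h => absurd h hX⟩
  choose NX hNX using hNX
  have hbd : ∀ X, leaf X → ∀ e ∈ dl X, e ∈ NX X := by
    intro X hX e he
    have h1 := cut_parity a b X (NX X)
    rw [Finset.sum_congr rfl (fun v hv => hNX X hX v hv), Finset.sum_const, smul_eq_mul, Nat.even_iff] at h1
    have h2 := hpar X
    have h3 := hleaf1 X hX
    obtain ⟨e', he'⟩ := Finset.card_pos.1 (by omega : 0 < ((NX X).filter (fun e => ¬ (a e ∈ X ↔ b e ∈ X))).card)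
    rw [Finset.mem_filter, ← hdl] at he'
    have : e = e' := Finset.card_le_one.1 h3.le e he e' he'.2
    rw [this]; exact he'.1
  let used : Finset V → Prop := fun X => ∃ e ∈ dl X, e ∈ N0 ∧ (a e ∈ V0 ∨ b e ∈ V0)
  have hused : ∀ X, leaf X → used X → ∀ e ∈ dl X, e ∈ N0 ∧ (a e ∈ V0 ∨ b e ∈ V0) := by
    rintro X hX ⟨e', he', h⟩ e he
    have : e = e' := Finset.card_le_one.1 (hleaf1 X hX).le e he e' he'
    rw [this]; exact h
  let N3 : Finset E := Finset.univ.filter (fun e => (e ∈ N0 ∧ (a e ∈ V0 ∨ b e ∈ V0)) ∨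
    ∃ X, leaf X ∧ used X ∧ a e ∈ X ∧ b e ∈ X ∧ e ∈ NX X)
  let N2 : Finset E := Finset.univ.filter (fun e =>
    ∃ X, leaf X ∧ ¬ used X ∧ a e ∈ X ∧ b e ∈ X ∧ e ∉ NX X)
  have hN3 : ∀ e, e ∈ N3 ↔ ((e ∈ N0 ∧ (a e ∈ V0 ∨ b e ∈ V0)) ∨
    ∃ X, leaf X ∧ used X ∧ a e ∈ X ∧ b e ∈ X ∧ e ∈ NX X) := by intro e; simp [N3]
  have hN2 : ∀ e, e ∈ N2 ↔ (∃ X, leaf X ∧ ¬ used X ∧ a e ∈ X ∧ b e ∈ X ∧ e ∉ NX X) := by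
    intro e; simp [N2]
  have hcong : ∀ v (N N' : Finset E), (∀ e, (a e = v ∨ b e = v) → (e ∈ N ↔ e ∈ N')) →
      ∑ e ∈ N, ((if a e = v then 1 else 0) + (if b e = v then 1 else 0) : ℕ) =
      ∑ e ∈ N', ((if a e = v then 1 else 0) + (if b e = v then 1 else 0) : ℕ) := by
    intro v N N' h
    have key : ∀ N : Finset E, ∑ e ∈ N, ((if a e = v then 1 else 0) + (if b e = v then 1 else 0) : ℕ)
        = ∑ e, if e ∈ N then ((if a e = v then 1 else 0) + (if b e = v then 1 else 0) : ℕ) else 0 := by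
      intro N; simp [Finset.sum_ite_mem]
    rw [key, key]
    refine Finset.sum_congr rfl fun e _ => ?_
    by_cases hi : a e = v ∨ b e = v
    · simp only [h e hi]
    · push Not at hi
      simp [hi.1, hi.2]
  refine ⟨N2, N3, ?_, ?_⟩
  · rw [Finset.disjoint_left]
    intro e h2 h3
    rw [hN2] at h2
    rw [hN3] at h3
    obtain ⟨X, hX, hu, ha, hb, -⟩ := h2
    rcases h3 with ⟨-, h | h⟩ | ⟨X', hX', hu', ha', -, -⟩
    · exact (hV0 _).1 h ⟨X, hX, ha⟩
    · exact (hV0 _).1 h ⟨X, hX, hb⟩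
    · rw [huniq X X' _ hX hX' ha ha'] at hu
      exact hu hu'
  · intro v
    by_cases hv : v ∈ V0
    · right
      have hno : ∀ X, leaf X → v ∉ X := fun X hX h => (hV0 v).1 hv ⟨X, hX, h⟩
      constructor
      · rw [hcong v N2 ∅, Finset.sum_empty]
        intro e he
        rw [hN2]
        simp only [Finset.notMem_empty, iff_false]
        rintro ⟨X, hX, -, ha, hb, -⟩
        rcases he with rfl | rfl
        · exact hno X hX ha
        · exact hno X hX hb
      · rw [hcong v N3 N0, hN0 v hv]
        intro e he
        rw [hN3]
        constructor
        · rintro (h | ⟨X, hX, -, ha, hb, -⟩)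
          · exact h.1
          · rcases he with rfl | rfl
            · exact absurd ha (hno X hX)
            · exact absurd hb (hno X hX)
        · intro h
          left
          rcases he with rfl | rfl
          · exact ⟨h, Or.inl hv⟩
          · exact ⟨h, Or.inr hv⟩
    · rw [hV0, not_not] at hv
      obtain ⟨X, hX, hv⟩ := hv
      have hedge : ∀ e, (a e = v ∨ b e = v) → (e ∈ dl X ∨ (a e ∈ X ∧ b e ∈ X)) := by
        intro e he
        rw [hdl]
        rcases he with rfl | rfl <;> tauto
      have hXX : ∀ e, (a e = v ∨ b e = v) → ∀ X', leaf X' → a e ∈ X' → b e ∈ X' → X' = X := by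
        rintro e (rfl | rfl) X' hX' ha hb
        · exact huniq _ _ _ hX' hX ha hv
        · exact huniq _ _ _ hX' hX hb hv
      have hin : ∀ e, a e ∈ X → b e ∈ X → ¬ (a e ∈ V0 ∨ b e ∈ V0) := by
        rintro e ha hb (h | h)
        · exact (hV0 _).1 h ⟨X, hX, ha⟩
        · exact (hV0 _).1 h ⟨X, hX, hb⟩
      by_cases hu : used X
      · right
        constructor
        · rw [hcong v N2 ∅, Finset.sum_empty]
          intro e he
          rw [hN2]
          simp only [Finset.notMem_empty, iff_false]
          rintro ⟨X', hX', hu', ha, hb, -⟩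
          rw [hXX e he X' hX' ha hb] at hu'
          exact hu' hu
        · rw [hcong v N3 (NX X), hNX X hX v hv]
          intro e he
          rw [hN3]
          rcases hedge e he with h | h
          · exact ⟨fun _ => hbd X hX e h, fun _ => Or.inl (hused X hX hu e h)⟩
          · constructor
            · rintro (h' | ⟨X', hX', -, ha, hb, h'⟩)
              · exact absurd h'.2 (hin e h.1 h.2)
              · rwa [hXX e he X' hX' ha hb] at h'
            · intro h'
              exact Or.inr ⟨X, hX, hu, h.1, h.2, h'⟩
      · left
        constructor
        · have h5 := hreg v
          rw [← Finset.sum_add_sum_compl (NX X), hNX X hX v hv] at h5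
          rw [hcong v N2 (NX X)ᶜ]
          · omega
          intro e he
          rw [hN2, Finset.mem_compl]
          constructor
          · rintro ⟨X', hX', -, ha, hb, h'⟩
            rwa [hXX e he X' hX' ha hb] at h'
          · intro h'
            rcases hedge e he with h | h
            · exact absurd (hbd X hX e h) h'
            · exact ⟨X, hX, hu, h.1, h.2, h'⟩
        · rw [hcong v N3 ∅, Finset.sum_empty]
          intro e he
          rw [hN3]
          simp only [Finset.notMem_empty, iff_false]
          rintro (h' | ⟨X', hX', hu', ha, hb, h'⟩)
          · rcases hedge e he with h | h
            · exact hu ⟨e, h, h'⟩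
            · exact hin e h.1 h.2 h'.2
          · rw [hXX e he X' hX' ha hb] at hu'
            exact hu hu'

theorem every_five_regular_graph_admits_zero_sum_six_flow
    {V E : Type*} [Fintype V] [Fintype E] [DecidableEq V]
    (G : Multigraph V E) (hreg : ∀ v, G.degree v = 5) :
    ∃ f : E → ℤ, G.IsZeroSumKFlow 6 f := by
  classical
  have hab : ∀ e, ∃ x y : V, G.ends e = s(x, y) ∧ x ≠ y := by
    intro e
    have hl := G.loopless e
    induction h : G.ends e using Sym2.ind with
    | _ x y =>
      rw [h] at hl
      exact ⟨x, y, rfl, by simpa using hl⟩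
  choose a b hends hne using hab
  have hmem : ∀ e v, v ∈ G.ends e ↔ (a e = v ∨ b e = v) := by
    intro e v
    rw [hends, Sym2.mem_iff, eq_comm, @eq_comm _ v (b e)]
  have hinc : ∀ v (f : E → ℤ), ∑ e ∈ G.incidence v, f e =
      ∑ e, f e * ((if a e = v then 1 else 0) + (if b e = v then 1 else 0)) := by
    intro v f
    unfold Multigraph.incidence
    rw [Finset.sum_filter]
    refine Finset.sum_congr rfl fun e _ => ?_
    have := hne e
    rw [if_congr (hmem e v) rfl rfl]
    by_cases h1 : a e = v <;> by_cases h2 : b e = v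
    · exact absurd (h1.trans h2.symm) this
    all_goals simp [h1, h2]
  have hreg' : ∀ v, ∑ e, ((if a e = v then 1 else 0) + (if b e = v then 1 else 0) : ℕ) = 5 := by
    intro v
    have h1 := hinc v (fun _ => 1)
    have h2 := hreg v
    unfold Multigraph.degree at h2
    simp only [one_mul, Finset.sum_const, nsmul_eq_mul, mul_one] at h1
    rw [h2] at h1
    exact_mod_cast h1.symm
  obtain ⟨N2, N3, hd, hN⟩ := partD a b hreg'
  obtain ⟨f, hf, hf0⟩ := partB a b hreg' N2 N3 hd hN
  refine ⟨f, ⟨fun e => (hf e).1, fun v => ?_⟩, fun e => ?_⟩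
  · rw [hinc, hf0]
  · have := (hf e).2
    norm_num
    exact this
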